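/- Let z₁ < ⋯ < z_K (K ≥ 2) be a grid with Cramér projection Π_C, let η_C be the unique fixed point of Π_C T^π, and let η_π be a return distribution function satisfying T^π η_π = η_π. Suppose for some δ > 0 and q ≥ 0 that each η_π^{(x,a)} is supported on [z₁ − δ, z_K + δ] and η_π^{(x,a)}([z₁−δ, z₁] ∪ [z_K, z_K+δ]) ≤ q for all (x,a) ∈ X×A. Then ℓ̄₂²(η_C, η_π) ≤ (1/(1−γ)) · ( max_{1 ≤ i < K} (z_{i+1} − z_i) + 2q²δ ). -/

import Mathlib

open MeasureTheory Filter Set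

noncomputable section

/-- The cumulative distribution function of a measure on ℝ. -/
def cdfFn (ν : Measure ℝ) (y : ℝ) : ℝ := (ν (Set.Iic y)).toReal

/-- The Cramér distance `ℓ₂` between two measures on ℝ. -/
def cramerDist (ν₁ ν₂ : Measure ℝ) : ℝ :=
  Real.sqrt (∫ x, (cdfFn ν₁ x - cdfFn ν₂ x) ^ 2)

/-- The hat functions associated with the grid `z 0 < z 1 < ⋯ < z (K-1)`. -/
def hatFn (K : ℕ) (z : ℕ → ℝ) (i : ℕ) (x : ℝ) : ℝ :=
  if i = 0 ∧ x ≤ z 0 then 1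
  else if i = K - 1 ∧ z (K - 1) ≤ x then 1
  else if i + 1 < K ∧ z i ≤ x ∧ x ≤ z (i + 1) then (z (i + 1) - x) / (z (i + 1) - z i)
  else if 0 < i ∧ z (i - 1) ≤ x ∧ x ≤ z i then (x - z (i - 1)) / (z i - z (i - 1))
  else 0

/-- The Cramér projection onto the grid `z 0 < z 1 < ⋯ < z (K-1)`. -/
def cramerProj (K : ℕ) (z : ℕ → ℝ) (ν : Measure ℝ) : Measure ℝ :=
  ∑ i ∈ Finset.range K, (ENNReal.ofReal (∫ w, hatFn K z i w ∂ν)) • Measure.dirac (z i)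

/-- The distributional Bellman operator. -/
def bellmanOp {X A : Type} [Fintype X] [Fintype A] [MeasurableSpace X] [MeasurableSpace A]
    (γ : ℝ) (p : X × A → Measure (ℝ × X)) (pol : X → Measure A)
    (η : X × A → Measure ℝ) (xa : X × A) : Measure ℝ :=
  (p xa).bind (fun rx' => ∑ a' : A, (pol rx'.2 {a'}) • (η (rx'.2, a')).map (fun t => rx'.1 + γ * t))

/-- The supremum-Cramér metric between return distribution functions. -/
def supCramer {X A : Type} [Fintype X] [Fintype A] (η μ : X × A → Measure ℝ) : ℝ :=
  ⨆ xa : X × A, cramerDist (η xa) (μ xa)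

/-- Square-integrable tails of the CDF. -/
def sqIntTails (ν : Measure ℝ) : Prop :=
  IntegrableOn (fun x => (cdfFn ν x) ^ 2) (Set.Iic 0) ∧
  IntegrableOn (fun x => (1 - cdfFn ν x) ^ 2) (Set.Ici 0)

lemma cdf_mono (ν : Measure ℝ) [IsProbabilityMeasure ν] : Monotone (cdfFn ν) := by
  intro x y h
  exact ENNReal.toReal_mono (measure_ne_top _ _) (measure_mono (Set.Iic_subset_Iic.2 h))

lemma cdf_nonneg (ν : Measure ℝ) (x : ℝ) : 0 ≤ cdfFn ν x := ENNReal.toReal_nonneg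

lemma cdf_le_one (ν : Measure ℝ) [IsProbabilityMeasure ν] (x : ℝ) : cdfFn ν x ≤ 1 :=
  ENNReal.toReal_le_of_le_ofReal zero_le_one (by simpa using prob_le_one)

lemma cdf_meas (ν : Measure ℝ) [IsProbabilityMeasure ν] : Measurable (cdfFn ν) :=
  (cdf_mono ν).measurable

lemma intInt_of_bdd {f : ℝ → ℝ} (hf : Measurable f) (C : ℝ) (hC : ∀ x, |f x| ≤ C) (a b : ℝ) :
    IntervalIntegrable f volume a b := by
  rw [intervalIntegrable_iff]
  have : IsFiniteMeasure (volume.restrict (Set.uIoc a b)) :=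
    ⟨by simp [Set.uIoc]⟩
  exact Integrable.of_bound hf.aestronglyMeasurable C (ae_of_all _ hC)

lemma cdfdiff_abs (ν μ : Measure ℝ) [IsProbabilityMeasure ν] [IsProbabilityMeasure μ] (x : ℝ) :
    |cdfFn ν x - cdfFn μ x| ≤ 1 := by
  have := cdf_nonneg ν x
  have := cdf_nonneg μ x
  have := cdf_le_one ν x
  have := cdf_le_one μ x
  rw [abs_le]; constructor <;> linarith

lemma cdfdiff_sq_le (ν μ : Measure ℝ) [IsProbabilityMeasure ν] [IsProbabilityMeasure μ] (x : ℝ) :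
    |(cdfFn ν x - cdfFn μ x) ^ 2| ≤ 1 := by
  rw [abs_pow]
  exact pow_le_one₀ (abs_nonneg _) (cdfdiff_abs ν μ x)

lemma cdfdiff_sq_meas (ν μ : Measure ℝ) [IsProbabilityMeasure ν] [IsProbabilityMeasure μ] :
    Measurable fun x => (cdfFn ν x - cdfFn μ x) ^ 2 :=
  ((cdf_meas ν).sub (cdf_meas μ)).pow_const 2

/-- Kernel version of the convexity / Tonelli bound. -/
lemma kernel_bound {Ω : Type*} [MeasurableSpace Ω] (p : Measure Ω) [IsProbabilityMeasure p]
    (κ₁ κ₂ : ProbabilityTheory.Kernel Ω ℝ) [ProbabilityTheory.IsMarkovKernel κ₁]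
    [ProbabilityTheory.IsMarkovKernel κ₂] (C : ENNReal)
    (h : ∀ᵐ ω ∂p, ∫⁻ y, ENNReal.ofReal ((cdfFn (κ₁ ω) y - cdfFn (κ₂ ω) y) ^ 2) ≤ C) :
    ∫⁻ y, ENNReal.ofReal ((cdfFn (p.bind κ₁) y - cdfFn (p.bind κ₂) y) ^ 2) ≤ C := by
  have hset : MeasurableSet {q : (Ω × ℝ) × ℝ | q.2 ≤ q.1.2} :=
    measurableSet_le (by fun_prop) (by fun_prop)
  have hj : ∀ (κ : ProbabilityTheory.Kernel Ω ℝ) [ProbabilityTheory.IsMarkovKernel κ],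
      Measurable fun q : Ω × ℝ => cdfFn (κ q.1) q.2 := by
    intro κ _
    have := ProbabilityTheory.Kernel.measurable_kernel_prodMk_left
      (κ := κ.comap (Prod.fst : Ω × ℝ → Ω) measurable_fst) hset
    exact this.ennreal_toReal
  have hb : ∀ (κ : ProbabilityTheory.Kernel Ω ℝ) [ProbabilityTheory.IsMarkovKernel κ] (y : ℝ),
      cdfFn (p.bind κ) y = ∫ ω, cdfFn (κ ω) y ∂p := by
    intro κ _ y
    unfold cdfFn
    rw [Measure.bind_apply measurableSet_Iic κ.measurable.aemeasurable, integral_toReal]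
    · exact (κ.measurable_coe measurableSet_Iic).aemeasurable
    · exact ae_of_all _ fun ω => measure_lt_top _ _
  have hi : ∀ (κ : ProbabilityTheory.Kernel Ω ℝ) [ProbabilityTheory.IsMarkovKernel κ] (y : ℝ),
      Integrable (fun ω => cdfFn (κ ω) y) p := by
    intro κ _ y
    refine Integrable.of_bound
      ((hj κ).comp (measurable_id.prodMk measurable_const)).aestronglyMeasurable 1
      (ae_of_all _ fun ω => ?_)
    rw [Real.norm_eq_abs, abs_of_nonneg (cdf_nonneg _ _)]
    exact cdf_le_one _ _
  have hsqm : Measurable fun q : Ω × ℝ => (cdfFn (κ₁ q.1) q.2 - cdfFn (κ₂ q.1) q.2) ^ 2 :=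
    ((hj κ₁).sub (hj κ₂)).pow_const 2
  have hsqi : ∀ y, Integrable (fun ω => (cdfFn (κ₁ ω) y - cdfFn (κ₂ ω) y) ^ 2) p := by
    intro y
    refine Integrable.of_bound
      (hsqm.comp (measurable_id.prodMk measurable_const)).aestronglyMeasurable 1
      (ae_of_all _ fun ω => cdfdiff_sq_le _ _ _)
  calc ∫⁻ y, ENNReal.ofReal ((cdfFn (p.bind κ₁) y - cdfFn (p.bind κ₂) y) ^ 2)
      ≤ ∫⁻ y, ∫⁻ ω, ENNReal.ofReal ((cdfFn (κ₁ ω) y - cdfFn (κ₂ ω) y) ^ 2) ∂p := by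
        refine lintegral_mono fun y => ?_
        rw [hb κ₁, hb κ₂, ← integral_sub (hi κ₁ y) (hi κ₂ y),
          ← ofReal_integral_eq_lintegral_ofReal (hsqi y) (ae_of_all _ fun _ => sq_nonneg _)]
        refine ENNReal.ofReal_le_ofReal ?_
        exact (even_two.convexOn_pow (𝕜 := ℝ)).map_integral_le (by fun_prop) isClosed_univ
          (ae_of_all _ fun _ => mem_univ _) ((hi κ₁ y).sub (hi κ₂ y)) (hsqi y)
    _ = ∫⁻ ω, (∫⁻ y, ENNReal.ofReal ((cdfFn (κ₁ ω) y - cdfFn (κ₂ ω) y) ^ 2)) ∂p := by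
        refine lintegral_lintegral_swap ?_
        exact (hsqm.comp measurable_swap).ennreal_ofReal.aemeasurable
    _ ≤ ∫⁻ ω, C ∂p := lintegral_mono_ae h
    _ = C := by simp

lemma exists_kernel {Ω : Type*} [MeasurableSpace Ω] (p : Measure Ω) [IsProbabilityMeasure p]
    (κ : Ω → Measure ℝ) (hm : AEMeasurable κ p) (hp : ∀ᵐ ω ∂p, IsProbabilityMeasure (κ ω)) :
    ∃ κ' : ProbabilityTheory.Kernel Ω ℝ, ProbabilityTheory.IsMarkovKernel κ' ∧
      κ =ᵐ[p] κ' := by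
  classical
  have hS : MeasurableSet {ω | hm.mk κ ω univ = 1} :=
    ((Measure.measurable_coe MeasurableSet.univ).comp hm.measurable_mk)
      (measurableSet_singleton 1)
  refine ⟨⟨Set.piecewise {ω | hm.mk κ ω univ = 1} (hm.mk κ) (fun _ => Measure.dirac 0),
    Measurable.piecewise hS hm.measurable_mk measurable_const⟩, ⟨fun ω => ?_⟩, ?_⟩
  · change IsProbabilityMeasure (Set.piecewise {ω | hm.mk κ ω univ = 1} (hm.mk κ)
      (fun _ => Measure.dirac 0) ω)
    by_cases h : ω ∈ {ω | hm.mk κ ω univ = 1}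
    · rw [Set.piecewise_eq_of_mem _ _ _ h]; exact ⟨h⟩
    · rw [Set.piecewise_eq_of_notMem _ _ _ h]; infer_instance
  · filter_upwards [hm.ae_eq_mk, hp] with ω h1 h2
    change _ = (Set.piecewise {ω | hm.mk κ ω univ = 1} (hm.mk κ)
      (fun _ => Measure.dirac 0) ω)
    rw [Set.piecewise_eq_of_mem _ _ _ (by rw [Set.mem_ofPred_eq, ← h1]; exact h2.measure_univ), h1]

lemma bind_bound {Ω : Type*} [MeasurableSpace Ω] (p : Measure Ω) [IsProbabilityMeasure p]
    (κ₁ κ₂ : Ω → Measure ℝ) (hm₁ : AEMeasurable κ₁ p) (hm₂ : AEMeasurable κ₂ p)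
    (hp₁ : ∀ᵐ ω ∂p, IsProbabilityMeasure (κ₁ ω)) (hp₂ : ∀ᵐ ω ∂p, IsProbabilityMeasure (κ₂ ω))
    (C : ENNReal)
    (h : ∀ᵐ ω ∂p, ∫⁻ y, ENNReal.ofReal ((cdfFn (κ₁ ω) y - cdfFn (κ₂ ω) y) ^ 2) ≤ C) :
    ∫⁻ y, ENNReal.ofReal ((cdfFn (p.bind κ₁) y - cdfFn (p.bind κ₂) y) ^ 2) ≤ C := by
  obtain ⟨k₁, i₁, e₁⟩ := exists_kernel p κ₁ hm₁ hp₁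
  obtain ⟨k₂, i₂, e₂⟩ := exists_kernel p κ₂ hm₂ hp₂
  rw [Measure.bind_congr_right e₁, Measure.bind_congr_right e₂]
  refine kernel_bound p k₁ k₂ C ?_
  filter_upwards [e₁, e₂, h] with ω h1 h2 h3
  rwa [← h1, ← h2]

/-- ramp function -/
def rampFn (z : ℕ → ℝ) (i : ℕ) (x : ℝ) : ℝ :=
  max 0 (min 1 ((z (i + 1) - x) / (z (i + 1) - z i)))

lemma ramp_low (z : ℕ → ℝ) (i : ℕ) (x : ℝ) (h : z i < z (i+1)) (hx : x ≤ z i) :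
    rampFn z i x = 1 := by
  unfold rampFn
  have : 1 ≤ (z (i + 1) - x) / (z (i + 1) - z i) := by
    rw [le_div_iff₀ (by linarith)]; linarith
  rw [min_eq_left this]; norm_num

lemma ramp_high (z : ℕ → ℝ) (i : ℕ) (x : ℝ) (h : z i < z (i+1)) (hx : z (i+1) ≤ x) :
    rampFn z i x = 0 := by
  unfold rampFn
  have : (z (i + 1) - x) / (z (i + 1) - z i) ≤ 0 :=
    div_nonpos_of_nonpos_of_nonneg (by linarith) (by linarith)
  exact max_eq_left ((min_le_right _ _).trans this)

lemma ramp_mid (z : ℕ → ℝ) (i : ℕ) (x : ℝ) (h : z i < z (i+1)) (hx : z i ≤ x)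
    (hx' : x ≤ z (i+1)) :
    rampFn z i x = (z (i + 1) - x) / (z (i + 1) - z i) := by
  unfold rampFn
  have h1 : (z (i + 1) - x) / (z (i + 1) - z i) ≤ 1 := by
    rw [div_le_one (by linarith)]; linarith
  have h0 : 0 ≤ (z (i + 1) - x) / (z (i + 1) - z i) :=
    div_nonneg (by linarith) (by linarith)
  rw [min_eq_right h1, max_eq_right h0]

lemma ramp_meas (z : ℕ → ℝ) (i : ℕ) : Measurable (rampFn z i) := by
  unfold rampFn; fun_prop

lemma ramp_abs (z : ℕ → ℝ) (i : ℕ) (x : ℝ) : |rampFn z i x| ≤ 1 := by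
  unfold rampFn
  rw [abs_of_nonneg (le_max_left _ _)]
  exact max_le zero_le_one (min_le_left _ _)

lemma hat_zero (K : ℕ) (hK : 2 ≤ K) (z : ℕ → ℝ) (hz : ∀ i, i + 1 < K → z i < z (i + 1)) (x : ℝ) :
    hatFn K z 0 x = rampFn z 0 x := by
  have h := hz 0 (by omega)
  unfold hatFn
  by_cases h0 : x ≤ z 0
  · rw [ramp_low z 0 x h h0]; simp [h0]
  have hK1 : ¬ (0 = K - 1) := by omega
  push Not at h0
  by_cases h1 : x ≤ z 1
  · rw [ramp_mid z 0 x h h0.le h1]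
    simp [h0.not_ge, hK1, h1, h0.le, show 1 < K by omega]
  · rw [ramp_high z 0 x h (by push Not at h1; exact h1.le)]
    simp [h0.not_ge, hK1, h1]

lemma hat_succ (K : ℕ) (z : ℕ → ℝ) (hz : ∀ i, i + 1 < K → z i < z (i + 1)) (j : ℕ)
    (hj : j + 2 < K) (x : ℝ) :
    hatFn K z (j + 1) x = rampFn z (j + 1) x - rampFn z j x := by
  have h := hz j (by omega)
  have h' := hz (j+1) (by omega)
  unfold hatFn
  have e1 : ¬ (j + 1 = K - 1) := by omega
  have e2 : j + 1 + 1 < K := by omega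
  simp only [Nat.succ_ne_zero, e1, e2, false_and, if_false, true_and, Nat.add_sub_cancel,
    Nat.succ_pos]
  rcases le_total x (z j) with a | a
  · rw [ramp_low z j x h a, ramp_low z (j+1) x h' (by linarith)]
    rw [if_neg (by intro hh; linarith [hh.1])]
    split_ifs with hh
    · have : x = z j := le_antisymm a hh.1
      simp [this]
    · simp
  rcases lt_or_ge x (z (j+1)) with b | b
  · rw [ramp_mid z j x h a b.le, ramp_low z (j+1) x h' b.le]
    rw [if_neg (by intro hh; linarith [hh.1]), if_pos ⟨a, b.le⟩]
    have : z (j+1) - z j ≠ 0 := by linarith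
    field_simp; ring
  rcases le_or_gt x (z (j+1+1)) with c | c
  · rw [ramp_high z j x h b, ramp_mid z (j+1) x h' b c, if_pos ⟨b, c⟩]; ring
  · rw [ramp_high z j x h b, ramp_high z (j+1) x h' c.le, if_neg (by intro hh; linarith [hh.2]),
      if_neg (by intro hh; linarith [hh.2])]; ring

lemma hat_ramp_int (K : ℕ) (hK : 2 ≤ K) (z : ℕ → ℝ) (hz : ∀ i, i + 1 < K → z i < z (i + 1))
    (ν : Measure ℝ) [IsProbabilityMeasure ν] (i : ℕ) (hi : i + 1 < K) :
    ∑ j ∈ Finset.range (i+1), ∫ w, hatFn K z j w ∂ν = ∫ w, rampFn z i w ∂ν := by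
  have hint : ∀ i, Integrable (rampFn z i) ν := fun i =>
    Integrable.of_bound (ramp_meas z i).aestronglyMeasurable 1 (ae_of_all _ (ramp_abs z i))
  induction i with
  | zero => simp [hat_zero K hK z hz]
  | succ j ih =>
    rw [Finset.sum_range_succ, ih (by omega)]
    simp_rw [hat_succ K z hz j hi]
    rw [integral_sub (hint _) (hint _)]; ring

lemma hat_nonneg (K : ℕ) (z : ℕ → ℝ) (i : ℕ) (x : ℝ) : 0 ≤ hatFn K z i x := by
  unfold hatFn
  split_ifs with h1 h2 h3 h4
  · norm_num
  · norm_num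
  · exact div_nonneg (by linarith [h3.2.2]) (by linarith [h3.2.1, h3.2.2])
  · exact div_nonneg (by linarith [h4.2.1]) (by linarith [h4.2.1, h4.2.2])
  · exact le_rfl

lemma grid_mono (K : ℕ) (z : ℕ → ℝ) (hz : ∀ i, i + 1 < K → z i < z (i + 1)) (i j : ℕ)
    (hij : i ≤ j) (hj : j < K) : z i ≤ z j := by
  induction j, hij using Nat.le_induction with
  | base => exact le_rfl
  | succ n hn ih => exact (ih (by omega)).trans (hz n hj).le

lemma proj_cdf (K : ℕ) (hK : 2 ≤ K) (z : ℕ → ℝ) (hz : ∀ i, i + 1 < K → z i < z (i + 1))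
    (ν : Measure ℝ) [IsProbabilityMeasure ν] (i : ℕ) (hi : i + 1 < K) (y : ℝ)
    (h1 : z i ≤ y) (h2 : y < z (i+1)) :
    cdfFn (cramerProj K z ν) y = ∫ w, rampFn z i w ∂ν := by
  rw [← hat_ramp_int K hK z hz ν i hi]
  have hnn : ∀ j ∈ Finset.range K, 0 ≤ ∫ w, hatFn K z j w ∂ν := fun j _ =>
    integral_nonneg fun w => hat_nonneg K z j w
  unfold cdfFn cramerProj
  rw [Measure.finsetSum_apply, ENNReal.toReal_sum]
  · have hsub : Finset.range (i+1) ⊆ Finset.range K := Finset.range_subset_range.2 hi.le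
    rw [← Finset.sum_subset hsub]
    · refine Finset.sum_congr rfl fun j hj => ?_
      have hj' := hsub hj
      have hjy : z j ≤ y := (grid_mono K z hz j i (by simp at hj; omega) (by omega)).trans h1
      simp [hjy, ENNReal.toReal_ofReal (hnn j hj')]
    · intro j hj hj'
      have : z (i+1) ≤ z j := grid_mono K z hz (i+1) j (by simp at hj'; omega) (by simpa using hj)
      have : ¬ z j ≤ y := by linarith
      simp [this]
  · intro j hj
    simp only [Measure.smul_apply, smul_eq_mul]
    exact ENNReal.mul_ne_top ENNReal.ofReal_ne_top (measure_ne_top _ _)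

lemma ramp_cdf (z : ℕ → ℝ) (i : ℕ) (h : z i < z (i+1))
    (ν : Measure ℝ) [IsProbabilityMeasure ν] :
    ∫ y in (z i)..(z (i+1)), cdfFn ν y = (z (i+1) - z i) * ∫ w, rampFn z i w ∂ν := by
  have e : ∀ y, cdfFn ν y = ∫ t, (if t ≤ y then (1:ℝ) else 0) ∂ν := by
    intro y
    have : (fun t : ℝ => if t ≤ y then (1:ℝ) else 0) = (Iic y).indicator 1 := by
      ext t; simp [Set.indicator]
    rw [this, integral_indicator_one measurableSet_Iic]; rfl
  simp_rw [e]
  rw [intervalIntegral.integral_of_le h.le, integral_integral_swap, ← integral_const_mul]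
  · refine integral_congr_ae (ae_of_all _ fun t => ?_)
    change ∫ y in Ioc (z i) (z (i+1)), (if t ≤ y then (1:ℝ) else 0) =
      (z (i+1) - z i) * rampFn z i t
    have : (fun y : ℝ => if t ≤ y then (1:ℝ) else 0) = (Ici t).indicator 1 := by
      ext y; simp [Set.indicator]
    rw [this, integral_indicator_one measurableSet_Ici, Measure.real,
      Measure.restrict_apply measurableSet_Ici]
    rcases le_total t (z i) with a | a
    · rw [show Ici t ∩ Ioc (z i) (z (i+1)) = Ioc (z i) (z (i+1)) from
        Set.inter_eq_right.2 fun y hy => a.trans hy.1.le, ramp_low z i t h a]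
      simp [h.le]
    rcases le_total t (z (i+1)) with b | b
    · rw [ramp_mid z i t h a b]
      have hne : z (i+1) - z i ≠ 0 := by linarith
      rw [measure_congr (show (Ici t ∩ Ioc (z i) (z (i+1)) : Set ℝ) =ᵐ[volume]
        Ioc t (z (i+1)) from ?_)]
      · rw [Real.volume_Ioc, ENNReal.toReal_ofReal (by linarith)]; field_simp
      · have hh : (Ici t ∩ Ioc (z i) (z (i+1)) : Set ℝ) =ᵐ[volume]
            (Ioi t ∩ Ioc (z i) (z (i+1)) : Set ℝ) :=
          (Ioi_ae_eq_Ici.symm).inter (ae_eq_refl _)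
        have hq : (Ioi t ∩ Ioc (z i) (z (i+1)) : Set ℝ) = Ioc t (z (i+1)) := ?_
        · rw [hq] at hh; exact hh
        ext y; simp only [mem_inter_iff, mem_Ioi, mem_Ioc]
        constructor
        · rintro ⟨h1, h2, h3⟩; exact ⟨h1, h3⟩
        · rintro ⟨h1, h3⟩; exact ⟨h1, by linarith, h3⟩
    · rw [ramp_high z i t h b]
      have : volume (Ici t ∩ Ioc (z i) (z (i+1))) = 0 := by
        refine measure_mono_null (t := {t}) ?_ (by simp)
        rintro y ⟨h1, h2, h3⟩
        simp only [mem_Ici] at h1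
        simp only [mem_singleton_iff]; linarith
      simp [this]
  · refine Integrable.of_bound (Measurable.aestronglyMeasurable ?_) 1 (ae_of_all _ fun q => ?_)
    · exact Measurable.ite (measurableSet_le (by fun_prop) (by fun_prop)) measurable_const
        measurable_const
    · simp only [Function.uncurry]; split_ifs <;> simp

lemma cell_bound (F G : ℝ → ℝ) (a b c : ℝ) (hab : a < b) (hF : Monotone F) (hG : Monotone G)
    (hF1 : ∀ x, |F x| ≤ 1) (hG1 : ∀ x, |G x| ≤ 1) (hc : ∫ y in a..b, F y = (b - a) * c) :
    ∫ y in a..b, (c - G y) ^ 2 ≤ (∫ y in a..b, (F y - G y) ^ 2) + (b - a) * (G b - G a) ^ 2 := by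
  have hw : 0 < b - a := by linarith
  obtain ⟨d, hd⟩ : ∃ d, ∫ y in a..b, G y = (b - a) * d :=
    ⟨(∫ y in a..b, G y) / (b - a), by field_simp⟩
  have iF := intInt_of_bdd hF.measurable 1 hF1 a b
  have iG := intInt_of_bdd hG.measurable 1 hG1 a b
  have iFG2 : IntervalIntegrable (fun y => (F y - G y) ^ 2) volume a b := by
    refine intInt_of_bdd ((hF.measurable.sub hG.measurable).pow_const 2) 4 (fun x => ?_) a b
    have := abs_le.1 (hF1 x); have := abs_le.1 (hG1 x)
    rw [abs_of_nonneg (sq_nonneg _)]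
    change (F x - G x) ^ 2 ≤ 4
    nlinarith
  have iG2 : IntervalIntegrable (fun y => (G y) ^ 2) volume a b := by
    refine intInt_of_bdd (hG.measurable.pow_const 2) 1 (fun x => ?_) a b
    have := abs_le.1 (hG1 x)
    rw [abs_of_nonneg (sq_nonneg _)]; nlinarith
  -- expansion
  have ex : ∀ e : ℝ, ∫ y in a..b, (e - G y) ^ 2
      = (b - a) * e ^ 2 - 2 * e * ((b - a) * d) + ∫ y in a..b, (G y) ^ 2 := by
    intro e
    have : ∀ y, (e - G y) ^ 2 = (e ^ 2 - 2 * e * G y) + (G y) ^ 2 := fun y => by ring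
    simp_rw [this]
    rw [intervalIntegral.integral_add (intervalIntegrable_const.sub (iG.const_mul _)) iG2,
      intervalIntegral.integral_sub intervalIntegrable_const (iG.const_mul _),
      intervalIntegral.integral_const_mul, hd]
    simp
  have h1 : (b - a) * (c - d) ^ 2 ≤ ∫ y in a..b, (F y - G y) ^ 2 := by
    have h0 : 0 ≤ ∫ y in a..b, ((F y - G y) - (c - d)) ^ 2 :=
      intervalIntegral.integral_nonneg hab.le fun _ _ => sq_nonneg _
    have : ∀ y, ((F y - G y) - (c - d)) ^ 2
      = (F y - G y) ^ 2 - 2 * (c - d) * (F y - G y) + (c - d) ^ 2 := fun y => by ring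
    simp_rw [this] at h0
    rw [intervalIntegral.integral_add (iFG2.sub ((iF.sub iG).const_mul _)) intervalIntegrable_const,
      intervalIntegral.integral_sub iFG2 ((iF.sub iG).const_mul _),
      intervalIntegral.integral_const_mul, intervalIntegral.integral_sub iF iG, hd, hc] at h0
    simp at h0
    linarith
  have hlo : G a ≤ d := by
    have : ∫ y in a..b, G a ≤ ∫ y in a..b, G y :=
      intervalIntegral.integral_mono_on hab.le intervalIntegrable_const iG fun y hy => hG hy.1
    rw [hd] at this; simp at this
    exact le_of_mul_le_mul_left this hw
  have hhi : d ≤ G b := by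
    have : ∫ y in a..b, G y ≤ ∫ y in a..b, G b :=
      intervalIntegral.integral_mono_on hab.le iG intervalIntegrable_const fun y hy => hG hy.2
    rw [hd] at this; simp at this
    exact le_of_mul_le_mul_left this hw
  have h2 : ∫ y in a..b, (d - G y) ^ 2 ≤ (b - a) * (G b - G a) ^ 2 := by
    have : ∫ y in a..b, (d - G y) ^ 2 ≤ ∫ y in a..b, (G b - G a) ^ 2 := by
      refine intervalIntegral.integral_mono_on hab.le ?_ intervalIntegrable_const fun y hy => ?_
      · have e : (fun y => (d - G y) ^ 2) = fun y => (d ^ 2 - 2 * d * G y) + (G y) ^ 2 := by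
          ext y; ring
        rw [e]
        exact (intervalIntegrable_const.sub (iG.const_mul _)).add iG2
      · have := hG hy.1; have := hG hy.2
        apply sq_le_sq' <;> linarith
    simpa using this
  rw [ex] at h2 ⊢
  nlinarith

lemma push_int (η μ : Measure ℝ) [IsProbabilityMeasure η] [IsProbabilityMeasure μ] (r γ : ℝ)
    (hγ : 0 ≤ γ) (hi : Integrable fun y => (cdfFn η y - cdfFn μ y) ^ 2) :
    Integrable (fun y => (cdfFn (η.map fun t => r + γ * t) y
      - cdfFn (μ.map fun t => r + γ * t) y) ^ 2) ∧
    ∫ y, (cdfFn (η.map fun t => r + γ * t) y - cdfFn (μ.map fun t => r + γ * t) y) ^ 2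
      = γ * ∫ y, (cdfFn η y - cdfFn μ y) ^ 2 := by
  have hm : Measurable fun t : ℝ => r + γ * t := by fun_prop
  rcases hγ.eq_or_lt with h | h
  · have : ∀ y, cdfFn (η.map fun t => r + γ * t) y - cdfFn (μ.map fun t => r + γ * t) y = 0 := by
      intro y
      unfold cdfFn
      rw [Measure.map_apply hm measurableSet_Iic, Measure.map_apply hm measurableSet_Iic]
      by_cases hr : r ≤ y
      · have : (fun t : ℝ => r + γ * t) ⁻¹' Iic y = univ := by ext t; simp [← h, hr]
        simp [this]
      · have : (fun t : ℝ => r + γ * t) ⁻¹' Iic y = ∅ := by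
          ext t; simp only [← h, mem_preimage, mem_Iic, mem_empty_iff_false, iff_false]
          simpa using hr
        simp [this]
    simp [this, ← h]
  · have key : ∀ (ν : Measure ℝ) (y : ℝ),
        cdfFn (ν.map fun t => r + γ * t) y = cdfFn ν ((y - r) / γ) := by
      intro ν y
      unfold cdfFn
      rw [Measure.map_apply hm measurableSet_Iic]
      congr 2
      ext t
      simp only [mem_preimage, mem_Iic]
      rw [le_div_iff₀ h]
      constructor <;> intro _ <;> linarith
    simp_rw [key]
    constructor
    · exact (hi.comp_div h.ne').comp_sub_right r
    · rw [integral_sub_right_eq_self (fun y => (cdfFn η (y / γ) - cdfFn μ (y / γ)) ^ 2) r,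
        Measure.integral_comp_div (fun y => (cdfFn η y - cdfFn μ y) ^ 2) γ, abs_of_pos h]
      rfl

lemma mix_bound {A : Type} [Fintype A] (w : A → ENNReal) (hw : ∑ a, w a = 1)
    (η μ : A → Measure ℝ) (hη : ∀ a, IsProbabilityMeasure (η a))
    (hμ : ∀ a, IsProbabilityMeasure (μ a)) (r γ : ℝ) (hγ : 0 ≤ γ) (M : ℝ)
    (hi : ∀ a, Integrable fun y => (cdfFn (η a) y - cdfFn (μ a) y) ^ 2)
    (hM : ∀ a, ∫ y, (cdfFn (η a) y - cdfFn (μ a) y) ^ 2 ≤ M) :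
    ∫⁻ y, ENNReal.ofReal ((cdfFn (∑ a, w a • (η a).map (fun t => r + γ * t)) y
      - cdfFn (∑ a, w a • (μ a).map (fun t => r + γ * t)) y) ^ 2) ≤ ENNReal.ofReal (γ * M) := by
  have hm : Measurable fun t : ℝ => r + γ * t := by fun_prop
  have hwt : ∀ a, w a ≠ ⊤ := fun a => by
    refine ne_top_of_le_ne_top ENNReal.one_ne_top ?_
    rw [← hw]
    exact Finset.single_le_sum (fun _ _ => zero_le) (Finset.mem_univ a)
  have hwr : ∑ a, (w a).toReal = 1 := by
    rw [← ENNReal.toReal_sum fun a _ => hwt a, hw]; rfl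
  have hc : ∀ (ν : A → Measure ℝ), (∀ a, IsProbabilityMeasure (ν a)) → ∀ y,
      cdfFn (∑ a, w a • (ν a).map (fun t => r + γ * t)) y
        = ∑ a, (w a).toReal * cdfFn ((ν a).map (fun t => r + γ * t)) y := by
    intro ν hν y
    unfold cdfFn
    rw [Measure.finsetSum_apply, ENNReal.toReal_sum]
    · simp
    · intro a _
      have := Measure.isProbabilityMeasure_map (μ := ν a) hm.aemeasurable
      simp only [Measure.smul_apply, smul_eq_mul]
      exact ENNReal.mul_ne_top (hwt a) (measure_ne_top _ _)
  have hP := fun a => push_int (η a) (μ a) r γ hγ (hi a)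
  set D : A → ℝ → ℝ := fun a y => cdfFn ((η a).map fun t => r + γ * t) y
      - cdfFn ((μ a).map fun t => r + γ * t) y with hD
  have hpt : ∀ y, (cdfFn (∑ a, w a • (η a).map (fun t => r + γ * t)) y
      - cdfFn (∑ a, w a • (μ a).map (fun t => r + γ * t)) y) ^ 2
      ≤ ∑ a, (w a).toReal * (D a y) ^ 2 := by
    intro y
    rw [hc η hη, hc μ hμ, ← Finset.sum_sub_distrib]
    have := (even_two.convexOn_pow (𝕜 := ℝ)).map_sum_le (t := Finset.univ)
      (w := fun a => (w a).toReal) (p := fun a => D a y)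
      (fun _ _ => ENNReal.toReal_nonneg) hwr (fun _ _ => mem_univ _)
    simp only [smul_eq_mul] at this
    simpa only [hD, mul_sub] using this
  have hInt : Integrable fun y => ∑ a, (w a).toReal * (D a y) ^ 2 :=
    integrable_finsetSum _ fun a _ => (hP a).1.const_mul _
  calc _ ≤ ∫⁻ y, ENNReal.ofReal (∑ a, (w a).toReal * (D a y) ^ 2) :=
        lintegral_mono fun y => ENNReal.ofReal_le_ofReal (hpt y)
    _ = ENNReal.ofReal (∫ y, ∑ a, (w a).toReal * (D a y) ^ 2) := by
        rw [ofReal_integral_eq_lintegral_ofReal hInt (ae_of_all _ fun y =>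
          Finset.sum_nonneg fun a _ => mul_nonneg ENNReal.toReal_nonneg (sq_nonneg _))]
    _ ≤ ENNReal.ofReal (γ * M) := by
        refine ENNReal.ofReal_le_ofReal ?_
        rw [integral_finsetSum _ fun a _ => (hP a).1.const_mul _]
        simp_rw [integral_const_mul]
        calc ∑ a, (w a).toReal * ∫ y, (D a y) ^ 2 ≤ ∑ a, (w a).toReal * (γ * M) := by
              refine Finset.sum_le_sum fun a _ => mul_le_mul_of_nonneg_left ?_
                ENNReal.toReal_nonneg
              rw [(hP a).2]
              exact mul_le_mul_of_nonneg_left (hM a) hγ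
          _ = γ * M := by rw [← Finset.sum_mul, hwr, one_mul]

lemma cdf_eq_zero (ν : Measure ℝ) (S : Set ℝ) (hS : ν Sᶜ = 0) (x : ℝ) (h : ∀ y ∈ S, x < y) :
    cdfFn ν x = 0 := by
  unfold cdfFn
  rw [measure_mono_null (fun y hy => ?_) hS]; · rfl
  intro hy'
  exact absurd hy (not_le.2 (h y hy'))

lemma cdf_compl (ν : Measure ℝ) [IsProbabilityMeasure ν] (x : ℝ) :
    1 - cdfFn ν x = (ν (Ioi x)).toReal := by
  have : ν.real (Iic x)ᶜ = 1 - ν.real (Iic x) := probReal_compl_eq_one_sub measurableSet_Iic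
  rw [compl_Iic] at this
  exact this.symm

lemma cdf_eq_one (ν : Measure ℝ) [IsProbabilityMeasure ν] (S : Set ℝ) (hS : ν Sᶜ = 0) (x : ℝ)
    (h : ∀ y ∈ S, y ≤ x) : cdfFn ν x = 1 := by
  have h1 := cdf_compl ν x
  rw [measure_mono_null (fun y hy => ?_) hS] at h1
  · simp at h1; linarith
  intro hy'
  exact absurd hy (not_lt.2 (h y hy'))

lemma grid_cdf_zero (K : ℕ) (z : ℕ → ℝ) (hz : ∀ i, i + 1 < K → z i < z (i + 1))
    (ρ : Measure ℝ) (hs : ρ {w | ∃ i < K, w = z i}ᶜ = 0) (x : ℝ) (hx : x < z 0) :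
    cdfFn ρ x = 0 := by
  refine cdf_eq_zero ρ _ hs x ?_
  rintro y ⟨i, hi, rfl⟩
  exact hx.trans_le (grid_mono K z hz 0 i (by omega) hi)

lemma grid_cdf_one (K : ℕ) (hK : 2 ≤ K) (z : ℕ → ℝ) (hz : ∀ i, i + 1 < K → z i < z (i + 1))
    (ρ : Measure ℝ) [IsProbabilityMeasure ρ]
    (hs : ρ {w | ∃ i < K, w = z i}ᶜ = 0) (x : ℝ) (hx : z (K-1) ≤ x) : cdfFn ρ x = 1 := by
  refine cdf_eq_one ρ _ hs x ?_
  rintro y ⟨i, hi, rfl⟩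
  exact (grid_mono K z hz i (K-1) (by omega) (by omega)).trans hx

lemma diff_off (K : ℕ) (hK : 2 ≤ K) (z : ℕ → ℝ) (hz : ∀ i, i + 1 < K → z i < z (i + 1))
    (ρ μ : Measure ℝ) [IsProbabilityMeasure ρ] [IsProbabilityMeasure μ]
    (hs : ρ {w | ∃ i < K, w = z i}ᶜ = 0) (δ : ℝ) (hδ : 0 < δ)
    (hsupp : μ (Set.Icc (z 0 - δ) (z (K - 1) + δ))ᶜ = 0) (x : ℝ)
    (hx : x ∉ Set.Icc (z 0 - δ) (z (K - 1) + δ)) : (cdfFn ρ x - cdfFn μ x) ^ 2 = 0 := by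
  by_cases h : z 0 - δ ≤ x
  · have h' : z (K-1) + δ < x := by
      by_contra h2; exact hx ⟨h, not_lt.1 h2⟩
    rw [grid_cdf_one K hK z hz ρ hs x (by linarith),
      cdf_eq_one μ _ hsupp x fun y hy => hy.2.trans h'.le]
    norm_num
  · push Not at h
    rw [grid_cdf_zero K z hz ρ hs x (by linarith),
      cdf_eq_zero μ _ hsupp x fun y hy => h.trans_le hy.1]
    norm_num

lemma diff_integrable (K : ℕ) (hK : 2 ≤ K) (z : ℕ → ℝ) (hz : ∀ i, i + 1 < K → z i < z (i + 1))
    (ρ μ : Measure ℝ) [IsProbabilityMeasure ρ] [IsProbabilityMeasure μ]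
    (hs : ρ {w | ∃ i < K, w = z i}ᶜ = 0) (δ : ℝ) (hδ : 0 < δ)
    (hsupp : μ (Set.Icc (z 0 - δ) (z (K - 1) + δ))ᶜ = 0) :
    Integrable fun x => (cdfFn ρ x - cdfFn μ x) ^ 2 := by
  have hon : IntegrableOn (fun x => (cdfFn ρ x - cdfFn μ x) ^ 2)
      (Set.Icc (z 0 - δ) (z (K - 1) + δ)) := by
    have : IsFiniteMeasure (volume.restrict (Set.Icc (z 0 - δ) (z (K - 1) + δ))) := ⟨by simp⟩
    exact Integrable.of_bound (cdfdiff_sq_meas ρ μ).aestronglyMeasurable 1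
      (ae_of_all _ fun x => cdfdiff_sq_le ρ μ x)
  refine (integrableOn_iff_integrable_of_support_subset fun x hx => ?_).1 hon
  by_contra h
  exact hx (diff_off K hK z hz ρ μ hs δ hδ hsupp x h)

lemma pair_bound (K : ℕ) (hK : 2 ≤ K) (z : ℕ → ℝ) (hz : ∀ i, i + 1 < K → z i < z (i + 1))
    (ν ρ μ : Measure ℝ) [IsProbabilityMeasure ν] [IsProbabilityMeasure ρ] [IsProbabilityMeasure μ]
    (hs : ρ {w | ∃ i < K, w = z i}ᶜ = 0) (hproj : cramerProj K z ν = ρ) (δ : ℝ) (hδ : 0 < δ)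
    (q : ℝ) (hq : 0 ≤ q)
    (hsupp : μ (Set.Icc (z 0 - δ) (z (K - 1) + δ))ᶜ = 0)
    (hex : μ (Set.Icc (z 0 - δ) (z 0) ∪ Set.Icc (z (K - 1)) (z (K - 1) + δ))
        ≤ ENNReal.ofReal q) :
    ∫ x, (cdfFn ρ x - cdfFn μ x) ^ 2 ≤
      (∫ x in (z 0)..(z (K-1)), (cdfFn ν x - cdfFn μ x) ^ 2) +
      ((⨆ i : Fin (K - 1), (z (i.1 + 1) - z i.1)) + 2 * q ^ 2 * δ) := by
  set W := ⨆ i : Fin (K - 1), (z (i.1 + 1) - z i.1) with hW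
  have hz0 : z 0 ≤ z (K-1) := grid_mono K z hz 0 (K-1) (by omega) (by omega)
  have hII : ∀ a b, IntervalIntegrable (fun x => (cdfFn ρ x - cdfFn μ x) ^ 2) volume a b :=
    fun a b => intInt_of_bdd (cdfdiff_sq_meas ρ μ) 1 (cdfdiff_sq_le ρ μ) a b
  have hII' : ∀ a b, IntervalIntegrable (fun x => (cdfFn ν x - cdfFn μ x) ^ 2) volume a b :=
    fun a b => intInt_of_bdd (cdfdiff_sq_meas ν μ) 1 (cdfdiff_sq_le ν μ) a b
  have hcup : ∀ S : Set ℝ, S ⊆ (Set.Icc (z 0 - δ) (z (K - 1) + δ))ᶜ ∪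
      (Set.Icc (z 0 - δ) (z 0) ∪ Set.Icc (z (K - 1)) (z (K - 1) + δ)) →
      (μ S).toReal ≤ q := by
    intro S hS
    refine ENNReal.toReal_le_of_le_ofReal hq ?_
    refine (measure_mono hS).trans ((measure_union_le _ _).trans ?_)
    rw [hsupp, zero_add]; exact hex
  have hlow : ∀ x ≤ z 0, cdfFn μ x ≤ q := by
    intro x hx
    refine hcup _ fun y hy => ?_
    by_cases h : y ∈ Set.Icc (z 0 - δ) (z (K - 1) + δ)
    · exact Or.inr (Or.inl ⟨h.1, le_trans hy hx⟩)
    · exact Or.inl h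
  have hhigh : ∀ x, z (K-1) ≤ x → 1 - cdfFn μ x ≤ q := by
    intro x hx
    rw [cdf_compl]
    refine hcup _ fun y hy => ?_
    by_cases h : y ∈ Set.Icc (z 0 - δ) (z (K - 1) + δ)
    · exact Or.inr (Or.inr ⟨hx.trans (le_of_lt hy), h.2⟩)
    · exact Or.inl h
  have hL : ∫ x in (z 0 - δ)..(z 0), (cdfFn ρ x - cdfFn μ x) ^ 2 ≤ q ^ 2 * δ := by
    calc ∫ x in (z 0 - δ)..(z 0), (cdfFn ρ x - cdfFn μ x) ^ 2
        ≤ ∫ x in (z 0 - δ)..(z 0), q ^ 2 := by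
          refine intervalIntegral.integral_mono_on_of_le_Ioo (by linarith) (hII _ _)
            intervalIntegrable_const fun x hx => ?_
          rw [grid_cdf_zero K z hz ρ hs x hx.2]
          have := hlow x hx.2.le
          have := cdf_nonneg μ x
          apply sq_le_sq' <;> linarith
      _ = q ^ 2 * δ := by simp; ring
  have hR : ∫ x in (z (K-1))..(z (K-1) + δ), (cdfFn ρ x - cdfFn μ x) ^ 2 ≤ q ^ 2 * δ := by
    calc ∫ x in (z (K-1))..(z (K-1) + δ), (cdfFn ρ x - cdfFn μ x) ^ 2
        ≤ ∫ x in (z (K-1))..(z (K-1) + δ), q ^ 2 := by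
          refine intervalIntegral.integral_mono_on (by linarith) (hII _ _)
            intervalIntegrable_const fun x hx => ?_
          rw [grid_cdf_one K hK z hz ρ hs x hx.1]
          have := hhigh x hx.1
          have := cdf_le_one μ x
          apply sq_le_sq' <;> linarith
      _ = q ^ 2 * δ := by simp; ring
  have hcell : ∀ i ∈ Finset.range (K-1),
      ∫ x in (z i)..(z (i+1)), (cdfFn ρ x - cdfFn μ x) ^ 2 ≤
      (∫ x in (z i)..(z (i+1)), (cdfFn ν x - cdfFn μ x) ^ 2) +
        W * (cdfFn μ (z (i+1)) - cdfFn μ (z i)) := by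
    intro i hi
    have hi' : i + 1 < K := by have := Finset.mem_range.1 hi; omega
    have hzi := hz i hi'
    have habs : ∀ (θ : Measure ℝ) [IsProbabilityMeasure θ] (x : ℝ), |cdfFn θ x| ≤ 1 := by
      intro θ _ x
      rw [abs_of_nonneg (cdf_nonneg _ _)]; exact cdf_le_one _ _
    have h1 := cell_bound (cdfFn ν) (cdfFn μ) (z i) (z (i+1)) _ hzi (cdf_mono ν) (cdf_mono μ)
      (habs ν) (habs μ) (ramp_cdf z i hzi ν)
    rw [intervalIntegral.integral_congr_Ioo_of_le (g := fun x =>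
      ((∫ w, rampFn z i w ∂ν) - cdfFn μ x) ^ 2) hzi.le]
    · refine h1.trans (add_le_add_right ?_ _)
      have hd0 : 0 ≤ cdfFn μ (z (i+1)) - cdfFn μ (z i) := by
        linarith [cdf_mono μ hzi.le]
      have hd1 : cdfFn μ (z (i+1)) - cdfFn μ (z i) ≤ 1 := by
        linarith [cdf_le_one μ (z (i+1)), cdf_nonneg μ (z i)]
      have hwW : z (i+1) - z i ≤ W :=
        le_ciSup (f := fun i : Fin (K - 1) => (z (i.1 + 1) - z i.1))
          (Set.finite_range _).bddAbove ⟨i, Finset.mem_range.1 hi⟩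
      exact mul_le_mul hwW (by nlinarith) (sq_nonneg _) (by linarith)
    · intro x hx
      simp only
      rw [← hproj, proj_cdf K hK z hz ν i hi' x hx.1.le hx.2]
  have hmid : ∫ x in (z 0)..(z (K-1)), (cdfFn ρ x - cdfFn μ x) ^ 2 ≤
      (∫ x in (z 0)..(z (K-1)), (cdfFn ν x - cdfFn μ x) ^ 2) + W := by
    have hs := Finset.sum_le_sum hcell
    rw [Finset.sum_add_distrib, ← Finset.mul_sum,
      Finset.sum_range_sub (fun i => cdfFn μ (z i)),
      intervalIntegral.sum_integral_adjacent_intervals fun k _ => hII _ _,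
      intervalIntegral.sum_integral_adjacent_intervals fun k _ => hII' _ _] at hs
    have hW0 : 0 ≤ W := by
      have := hz 0 (by omega)
      have hwW : z (0+1) - z 0 ≤ W :=
        le_ciSup (f := fun i : Fin (K - 1) => (z (i.1 + 1) - z i.1))
          (Set.finite_range _).bddAbove ⟨0, by omega⟩
      linarith
    have : cdfFn μ (z (K-1)) - cdfFn μ (z 0) ≤ 1 := by
      linarith [cdf_le_one μ (z (K-1)), cdf_nonneg μ (z 0)]
    nlinarith
  have htot : ∫ x, (cdfFn ρ x - cdfFn μ x) ^ 2
      = ∫ x in (z 0 - δ)..(z (K-1) + δ), (cdfFn ρ x - cdfFn μ x) ^ 2 := by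
    rw [intervalIntegral.integral_of_le (by linarith), ← integral_Icc_eq_integral_Ioc,
      setIntegral_eq_integral_of_forall_compl_eq_zero]
    exact fun x hx => diff_off K hK z hz ρ μ hs δ hδ hsupp x hx
  rw [htot, ← intervalIntegral.integral_add_adjacent_intervals (hII (z 0 - δ) (z 0)) (hII _ _),
    ← intervalIntegral.integral_add_adjacent_intervals (hII (z 0) (z (K-1))) (hII _ _)]
  linarith

/-- Approximation error bound for the fixed point of the projected
Bellman operator under a misspecified support. -/
theorem cramerDist_fixedPoint_bound_misspecified
    {X A : Type} [Fintype X] [Fintype A] [Nonempty X] [Nonempty A]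
    [MeasurableSpace X] [MeasurableSpace A]
    (γ : ℝ) (hγ0 : 0 ≤ γ) (hγ1 : γ < 1)
    (p : X × A → Measure (ℝ × X)) (hp : ∀ xa, IsProbabilityMeasure (p xa))
    (pol : X → Measure A) (hpol : ∀ x, IsProbabilityMeasure (pol x))
    (K : ℕ) (hK : 2 ≤ K) (z : ℕ → ℝ) (hz : ∀ i, i + 1 < K → z i < z (i + 1))
    -- η_C : the unique fixed point of Π_C T^π, supported on the grid
    (ηC : X × A → Measure ℝ) (hηCprob : ∀ xa, IsProbabilityMeasure (ηC xa))
    (hηCsupp : ∀ xa, ηC xa {w | ∃ i < K, w = z i}ᶜ = 0)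
    (hηCfix : ∀ xa, cramerProj K z (bellmanOp γ p pol ηC xa) = ηC xa)
    -- η_π : the true return distribution function, a fixed point of T^π
    (ηπ : X × A → Measure ℝ) (hηπprob : ∀ xa, IsProbabilityMeasure (ηπ xa))
    (hηπfix : ∀ xa, bellmanOp γ p pol ηπ xa = ηπ xa)
    (δ : ℝ) (hδ : 0 < δ) (q : ℝ) (hq : 0 ≤ q)
    (hηπsupp : ∀ xa, ηπ xa (Set.Icc (z 0 - δ) (z (K - 1) + δ))ᶜ = 0)
    (hηπexcess : ∀ xa,
      ηπ xa (Set.Icc (z 0 - δ) (z 0) ∪ Set.Icc (z (K - 1)) (z (K - 1) + δ))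
        ≤ ENNReal.ofReal q) :
    (supCramer ηC ηπ) ^ 2
      ≤ (1 / (1 - γ)) * ((⨆ i : Fin (K - 1), (z (i.1 + 1) - z i.1)) + 2 * q ^ 2 * δ) := by
  classical
  -- the one-step kernels
  let κ : (X × A → Measure ℝ) → ℝ × X → Measure ℝ := fun η rx' =>
    ∑ a' : A, (pol rx'.2 {a'}) • (η (rx'.2, a')).map (fun t => rx'.1 + γ * t)
  have hbell : ∀ η xa, bellmanOp γ p pol η xa = (p xa).bind (κ η) := fun _ _ => rfl
  have hmeas : ∀ η xa, bellmanOp γ p pol η xa ≠ 0 → AEMeasurable (κ η) (p xa) := by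
    intro η xa h
    by_contra hn
    refine h ?_
    rw [hbell, Measure.bind, Measure.map_of_not_aemeasurable hn, Measure.join_zero]
  have hmπ : ∀ xa, AEMeasurable (κ ηπ) (p xa) := fun xa => hmeas _ _ (by
    rw [hηπfix]; exact (hηπprob xa).ne_zero)
  have hmC : ∀ xa, AEMeasurable (κ ηC) (p xa) := fun xa => hmeas _ _ (by
    intro h0
    have := hηCfix xa
    rw [h0] at this
    refine IsProbabilityMeasure.ne_zero (ηC xa) ?_
    rw [← this]
    simp [cramerProj])
  have hκuniv : ∀ η : X × A → Measure ℝ, (∀ xa, IsProbabilityMeasure (η xa)) → ∀ rx : ℝ × X,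
      κ η rx univ = ∑ a, pol rx.2 {a} := by
    intro η hη rx
    have hm : Measurable fun t : ℝ => rx.1 + γ * t := by fun_prop
    simp only [κ]
    rw [Measure.finsetSum_apply]
    refine Finset.sum_congr rfl fun a _ => ?_
    rw [Measure.smul_apply, Measure.map_apply hm MeasurableSet.univ]
    simp
  have hw : ∀ xa, ∀ᵐ rx ∂(p xa), ∑ a, pol rx.2 {a} = 1 := by
    intro xa
    have h1 : ∫⁻ rx, κ ηπ rx univ ∂(p xa) = 1 := by
      rw [← Measure.bind_apply MeasurableSet.univ (hmπ xa), ← hbell, hηπfix]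
      exact (hηπprob xa).measure_univ
    have hle : ∀ rx : ℝ × X, 1 ≤ κ ηπ rx univ := by
      intro rx
      rw [hκuniv ηπ hηπprob]
      calc (1 : ENNReal) = pol rx.2 univ := (hpol rx.2).measure_univ.symm
        _ = pol rx.2 (⋃ a ∈ (Finset.univ : Finset A), {a}) := by congr 1; ext a; simp
        _ ≤ _ := measure_biUnion_finset_le _ _
    have := ae_eq_of_ae_le_of_lintegral_le (μ := p xa) (f := fun _ => 1)
      (g := fun rx => κ ηπ rx univ) (ae_of_all _ hle) (by simp)
      ((Measure.measurable_coe MeasurableSet.univ).comp_aemeasurable (hmπ xa)) (by simp [h1])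
    filter_upwards [this] with rx hrx
    rw [← hκuniv ηπ hηπprob, ← hrx]
  have hpr : ∀ η : X × A → Measure ℝ, (∀ xa, IsProbabilityMeasure (η xa)) → ∀ xa,
      ∀ᵐ rx ∂(p xa), IsProbabilityMeasure (κ η rx) := by
    intro η hη xa
    filter_upwards [hw xa] with rx hrx
    exact ⟨by rw [hκuniv η hη, hrx]⟩
  have hTC : ∀ xa, IsProbabilityMeasure (bellmanOp γ p pol ηC xa) := by
    intro xa
    constructor
    rw [hbell, Measure.bind_apply MeasurableSet.univ (hmC xa),
      lintegral_congr_ae (g := fun _ => 1)]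
    · simp
    · filter_upwards [hpr ηC hηCprob xa] with rx hrx
      exact hrx.measure_univ
  have hInt : ∀ xa, Integrable fun x => (cdfFn (ηC xa) x - cdfFn (ηπ xa) x) ^ 2 := fun xa =>
    diff_integrable K hK z hz (ηC xa) (ηπ xa) (hηCsupp xa) δ hδ (hηπsupp xa)
  -- the maximal squared distance
  obtain ⟨xm, hxm⟩ := Finite.exists_max
    fun xa => ∫ x, (cdfFn (ηC xa) x - cdfFn (ηπ xa) x) ^ 2
  set M := ∫ x, (cdfFn (ηC xm) x - cdfFn (ηπ xm) x) ^ 2 with hM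
  have hM0 : 0 ≤ M := integral_nonneg fun _ => sq_nonneg _
  set B := (⨆ i : Fin (K - 1), (z (i.1 + 1) - z i.1)) + 2 * q ^ 2 * δ with hB
  have hlin : ∫⁻ y, ENNReal.ofReal ((cdfFn (bellmanOp γ p pol ηC xm) y
      - cdfFn (ηπ xm) y) ^ 2) ≤ ENNReal.ofReal (γ * M) := by
    rw [← hηπfix xm, hbell, hbell]
    refine bind_bound (p xm) (κ ηC) (κ ηπ) (hmC xm) (hmπ xm) (hpr _ hηCprob xm)
      (hpr _ hηπprob xm) _ ?_
    filter_upwards [hw xm] with rx hrx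
    exact mix_bound (fun a => pol rx.2 {a}) hrx (fun a => ηC (rx.2, a)) (fun a => ηπ (rx.2, a))
      (fun a => hηCprob _) (fun a => hηπprob _) rx.1 γ hγ0 M (fun a => hInt _)
      (fun a => hxm _)
  have := hTC xm
  have hz0 : z 0 ≤ z (K-1) := grid_mono K z hz 0 (K-1) (by omega) (by omega)
  have hcontr : ∫ x in (z 0)..(z (K-1)), (cdfFn (bellmanOp γ p pol ηC xm) x
      - cdfFn (ηπ xm) x) ^ 2 ≤ γ * M := by
    rw [intervalIntegral.integral_of_le hz0,
      integral_eq_lintegral_of_nonneg_ae (ae_of_all _ fun _ => sq_nonneg _)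
        (cdfdiff_sq_meas _ _).aestronglyMeasurable]
    refine ENNReal.toReal_le_of_le_ofReal (mul_nonneg hγ0 hM0) ?_
    exact (setLIntegral_le_lintegral _ _).trans hlin
  have hpair := pair_bound K hK z hz (bellmanOp γ p pol ηC xm) (ηC xm) (ηπ xm) (hηCsupp xm)
    (hηCfix xm) δ hδ q hq (hηπsupp xm) (hηπexcess xm)
  have hMB : M ≤ 1 / (1 - γ) * B := by
    rw [one_div, inv_mul_eq_div, le_div_iff₀ (by linarith)]
    linarith
  refine le_trans ?_ hMB
  have hsup : supCramer ηC ηπ ≤ Real.sqrt M :=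
    ciSup_le fun xa => Real.sqrt_le_sqrt (hxm xa)
  have hsup0 : 0 ≤ supCramer ηC ηπ := Real.iSup_nonneg fun xa => Real.sqrt_nonneg _
  calc supCramer ηC ηπ ^ 2 ≤ Real.sqrt M ^ 2 := pow_le_pow_left₀ hsup0 hsup 2
    _ = M := Real.sq_sqrt hM0

end
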